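/- Let (P,ρ) be a locally finite weakly ranked poset and let H be an element of I_ρ(P) such that H_{ss}(x) = 1 for all s ∈ P and H_{st}(x) = x^{ρ_{st}−1} H_{st}(1/x) for every s < t. Then there exists a unique (P,ρ)-kernel κ such that H is the Chow function associated to κ; it is given by κ = H^rev · H⁻¹. -/

import Mathlib

/-!
All computations take place in Mathlib's `IncidenceAlgebra ℤ[X] α`, whose product is `conv` and whose
unit is `dlt`. Let `h` be the element given by `H` and `g = h⁻¹`, which exists because `h` is
unipotent. The symmetry of `H_{st}` around `(ρ_{st} - 1)/2` says exactly that `h^rev` agrees with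
`x h` off the diagonal, that is, `h^rev = x h - (x - 1) δ`.

Put `κ = h^rev g = x δ - (x - 1) g`. Reversal is multiplicative on `I_ρ` and involutive, so
`κ^rev = h g^rev` is the inverse of `κ`, which makes `κ` a kernel. The second formula for `κ` shows
that its reduced kernel is `-g`, so that `H` is its Chow function.

Uniqueness: if `H` is the Chow function of a kernel `κ'`, then the reduced kernel of `κ'` is `-g`.
Evaluating `κ' κ'^rev = δ` at `x = 1` gives `κ'(1)² = δ` with `κ'(1)` unipotent over `ℤ`, whence
`κ'(1) = δ` (`kernel_eval_one`). Thus `x - 1` divides `κ'_{st}` for `s < t`, and `κ'` is recovered from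
its reduced kernel.
-/

open Finset Polynomial
open scoped Classical

noncomputable section

variable {α : Type*}

/-- Convolution product in the incidence algebra of a locally finite poset over `ℤ[x]`.
Only the values on intervals `s ≤ t` are relevant. -/
def conv [PartialOrder α] [LocallyFiniteOrder α] (a b : α → α → Polynomial ℤ) :
    α → α → Polynomial ℤ :=
  fun s t => ∑ w ∈ Finset.Icc s t, a s w * b w t

/-- The identity `δ` of the incidence algebra. -/
def dlt [PartialOrder α] : α → α → Polynomial ℤ :=
  fun s t => if s = t then 1 else 0

/-- The involution `a ↦ a^rev`, given by `(a^rev)_{st}(x) = x^{ρ_{st}} a_{st}(1/x)`. -/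
def rev (ρ : α → α → ℕ) (a : α → α → Polynomial ℤ) : α → α → Polynomial ℤ :=
  fun s t => (a s t).reflect (ρ s t)

/-- A weak rank function on a poset. -/
structure IsWeakRank [Preorder α] (ρ : α → α → ℕ) : Prop where
  pos : ∀ ⦃s t : α⦄, s < t → 0 < ρ s t
  add : ∀ ⦃s w t : α⦄, s ≤ w → w ≤ t → ρ s t = ρ s w + ρ w t

/-- `κ` is a `(P,ρ)`-kernel: it lies in `I_ρ(P)`, is `1` on the diagonal, and `κ⁻¹ = κ^rev`. -/
structure IsKernel [PartialOrder α] [LocallyFiniteOrder α] (ρ : α → α → ℕ)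
    (κ : α → α → Polynomial ℤ) : Prop where
  degLE : ∀ ⦃s t : α⦄, s ≤ t → (κ s t).natDegree ≤ ρ s t
  diag : ∀ s : α, κ s s = 1
  left : ∀ ⦃s t : α⦄, s ≤ t → conv (rev ρ κ) κ s t = dlt s t
  right : ∀ ⦃s t : α⦄, s ≤ t → conv κ (rev ρ κ) s t = dlt s t

/-- The reduced kernel `κ̄`: `κ̄_{st} = κ_{st}/(x-1)` for `s < t` and `κ̄_{ss} = -1`. -/
def red [PartialOrder α] (κ : α → α → Polynomial ℤ) : α → α → Polynomial ℤ :=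
  fun s t => if s = t then -1 else κ s t /ₘ (X - 1)

/-- `H` is the Chow function of `κ`, i.e. `H = -(κ̄)⁻¹`. -/
structure IsChow [PartialOrder α] [LocallyFiniteOrder α] (κ H : α → α → Polynomial ℤ) : Prop where
  left : ∀ ⦃s t : α⦄, s ≤ t → conv (red κ) H s t = -dlt s t
  right : ∀ ⦃s t : α⦄, s ≤ t → conv H (red κ) s t = -dlt s t

/-- `f` is the right KLS function of the kernel `κ`. -/
structure IsRightKLS [PartialOrder α] [LocallyFiniteOrder α] (ρ : α → α → ℕ)
    (κ f : α → α → Polynomial ℤ) : Prop where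
  diag : ∀ s : α, f s s = 1
  degLT : ∀ ⦃s t : α⦄, s < t → 2 * (f s t).natDegree < ρ s t
  rev_eq : ∀ ⦃s t : α⦄, s ≤ t → rev ρ f s t = conv κ f s t

/-- `g` is the left KLS function of the kernel `κ`. -/
structure IsLeftKLS [PartialOrder α] [LocallyFiniteOrder α] (ρ : α → α → ℕ)
    (κ g : α → α → Polynomial ℤ) : Prop where
  diag : ∀ s : α, g s s = 1
  degLT : ∀ ⦃s t : α⦄, s < t → 2 * (g s t).natDegree < ρ s t
  rev_eq : ∀ ⦃s t : α⦄, s ≤ t → rev ρ g s t = conv g κ s t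

/-- `p` is symmetric with center of symmetry `d/2`, i.e. `p(x) = x^d p(1/x)`. -/
def PolySymm (d : ℕ) (p : Polynomial ℤ) : Prop := p.natDegree ≤ d ∧ p.reflect d = p

/-- All coefficients of `p` are non-negative. -/
def PolyNonneg (p : Polynomial ℤ) : Prop := ∀ n, 0 ≤ p.coeff n

/-- The coefficient sequence of `p` is unimodal. -/
def PolyUnimodal (p : Polynomial ℤ) : Prop :=
  ∃ j, (∀ i < j, p.coeff i ≤ p.coeff (i + 1)) ∧ ∀ i, j ≤ i → p.coeff (i + 1) ≤ p.coeff i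

end

namespace ChowKernel

section

variable {α : Type*} [PartialOrder α] [LocallyFiniteOrder α]

set_option linter.unusedSectionVars false

/-- The entries of the left inverse of a function `H` with `H_{ss} = 1`, by recursion
on the interval. -/
noncomputable def invFun (H : α → α → ℤ[X]) (s : α) : α → ℤ[X]
  | t =>
    if s = t then 1
    else
      -∑ w ∈ (Ico s t).attach,
          let h := mem_Ico.1 w.2
          have : (Icc s w).card < (Icc s t).card :=
            card_lt_card (Icc_ssubset_Icc_right (h.1.trans h.2.le) le_rfl h.2)
          invFun H s w * H w t
termination_by t => (Icc s t).card

lemma invFun_apply (H : α → α → ℤ[X]) (s t : α) :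
    invFun H s t = if s = t then 1 else -∑ w ∈ Ico s t, invFun H s w * H w t := by
  rw [invFun, ← sum_attach (Ico s t)]

/-- The element of the incidence algebra with the values of `a` on intervals. -/
noncomputable def toInc (a : α → α → ℤ[X]) : IncidenceAlgebra ℤ[X] α :=
  ⟨fun s t => if s ≤ t then a s t else 0, fun _ _ h => if_neg h⟩

lemma toInc_apply (a : α → α → ℤ[X]) {s t : α} (h : s ≤ t) : toInc a s t = a s t := if_pos h

lemma toInc_mul (a b : α → α → ℤ[X]) (s t : α) :
    (toInc a * toInc b) s t = conv a b s t := by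
  refine sum_congr rfl fun w hw => ?_
  rw [mem_Icc] at hw
  rw [toInc_apply _ hw.1, toInc_apply _ hw.2]

lemma exists_left_inv (f : IncidenceAlgebra ℤ[X] α) (hf : ∀ s, f s s = 1) :
    ∃ g : IncidenceAlgebra ℤ[X] α, (∀ s, g s s = 1) ∧ g * f = 1 := by
  have hg : ∀ s t, s ≤ t → toInc (invFun f) s t = invFun f s t := fun s t => toInc_apply _
  refine ⟨toInc (invFun f), fun s => ?_, ?_⟩
  · rw [hg _ _ le_rfl, invFun_apply, if_pos rfl]
  · ext1 s t hst
    rw [IncidenceAlgebra.mul_apply, IncidenceAlgebra.one_apply,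
      sum_congr rfl fun w hw => by rw [hg _ _ (mem_Icc.1 hw).1]]
    obtain rfl | hne := eq_or_ne s t
    · rw [Icc_self, sum_singleton, invFun_apply, if_pos rfl, if_pos rfl, hf, mul_one]
    · rw [if_neg hne, ← Ico_insert_right hst, sum_insert right_notMem_Ico, hf, mul_one,
        invFun_apply, if_neg hne, neg_add_cancel]

lemma neg_mul_inc (f g : IncidenceAlgebra ℤ[X] α) : -f * g = -(f * g) := by
  ext1 s t _
  simp

lemma mul_neg_inc (f g : IncidenceAlgebra ℤ[X] α) : f * -g = -(f * g) := by
  ext1 s t _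
  simp

/-- The left inverse `g` of a unipotent `f` is unipotent, so it has a left inverse as well, which
must be `f`. -/
lemma exists_inv (f : IncidenceAlgebra ℤ[X] α) (hf : ∀ s, f s s = 1) :
    ∃ g : IncidenceAlgebra ℤ[X] α, (∀ s, g s s = 1) ∧ g * f = 1 ∧ f * g = 1 := by
  obtain ⟨g, hg, hgf⟩ := exists_left_inv f hf
  obtain ⟨k, -, hkg⟩ := exists_left_inv g hg
  have hk : k = f := left_inv_eq_right_inv hkg hgf
  exact ⟨g, hg, hgf, hk ▸ hkg⟩

/-- Membership in the subalgebra `I_ρ(P)`. -/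
def DegLE (ρ : α → α → ℕ) (f : IncidenceAlgebra ℤ[X] α) : Prop :=
  ∀ s t, s ≤ t → (f s t).natDegree ≤ ρ s t

/-- The involution `rev` on the incidence algebra. -/
noncomputable def revInc (ρ : α → α → ℕ) (f : IncidenceAlgebra ℤ[X] α) :
    IncidenceAlgebra ℤ[X] α :=
  ⟨rev ρ f, fun s t h => by
    rw [rev, IncidenceAlgebra.apply_eq_zero_of_not_le h, reflect_zero]⟩

lemma revInc_apply (ρ : α → α → ℕ) (f : IncidenceAlgebra ℤ[X] α) (s t : α) :
    revInc ρ f s t = (f s t).reflect (ρ s t) := rfl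

lemma revInc_revInc (ρ : α → α → ℕ) (f : IncidenceAlgebra ℤ[X] α) :
    revInc ρ (revInc ρ f) = f := by
  ext1 s t _
  rw [revInc_apply, revInc_apply, reflect_reflect]

variable {ρ : α → α → ℕ}

lemma rank_self (hρ : IsWeakRank ρ) (s : α) : ρ s s = 0 := by
  have := hρ.add (le_refl s) (le_refl s)
  omega

lemma revInc_one (hρ : IsWeakRank ρ) : revInc ρ (1 : IncidenceAlgebra ℤ[X] α) = 1 := by
  ext1 s t _
  rw [revInc_apply, IncidenceAlgebra.one_apply]
  split_ifs with h
  · subst h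
    rw [rank_self hρ, reflect_one, pow_zero]
  · exact reflect_zero

lemma DegLE.revInc {f : IncidenceAlgebra ℤ[X] α} (hf : DegLE ρ f) : DegLE ρ (revInc ρ f) :=
  fun s t hst => natDegree_reflect_le.trans (max_le le_rfl (hf s t hst))

lemma DegLE.mul (hρ : IsWeakRank ρ) {f g : IncidenceAlgebra ℤ[X] α} (hf : DegLE ρ f)
    (hg : DegLE ρ g) : DegLE ρ (f * g) := by
  intro s t _
  refine natDegree_sum_le_of_forall_le _ _ fun w hw => ?_
  rw [mem_Icc] at hw
  rw [hρ.add hw.1 hw.2]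
  exact natDegree_mul_le_of_le (hf _ _ hw.1) (hg _ _ hw.2)

lemma reflect_sum {ι : Type*} (N : ℕ) (S : Finset ι) (p : ι → ℤ[X]) :
    (∑ i ∈ S, p i).reflect N = ∑ i ∈ S, (p i).reflect N := by
  induction S using Finset.induction_on with
  | empty => simp
  | insert a S ha ih => rw [sum_insert ha, sum_insert ha, reflect_add, ih]

lemma revInc_mul (hρ : IsWeakRank ρ) {f g : IncidenceAlgebra ℤ[X] α} (hf : DegLE ρ f)
    (hg : DegLE ρ g) : revInc ρ (f * g) = revInc ρ f * revInc ρ g := by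
  ext1 s t _
  rw [revInc_apply, IncidenceAlgebra.mul_apply, IncidenceAlgebra.mul_apply, reflect_sum]
  refine sum_congr rfl fun w hw => ?_
  rw [mem_Icc] at hw
  rw [hρ.add hw.1 hw.2, reflect_mul _ _ (hf _ _ hw.1) (hg _ _ hw.2), revInc_apply, revInc_apply]

/-- Induction on intervals with a fixed lower end. -/
lemma interval_induction (s : α) {p : α → Prop}
    (ih : ∀ t, s ≤ t → (∀ w, s ≤ w → w < t → p w) → p t) (t : α) (hst : s ≤ t) : p t := by
  induction hn : (Icc s t).card using Nat.strong_induction_on generalizing t with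
  | _ n IH =>
    subst hn
    exact ih t hst fun w hsw hwt =>
      IH _ (card_lt_card (Icc_ssubset_Icc_right hst le_rfl hwt)) w hsw rfl

lemma DegLE.of_mul_eq_one (hρ : IsWeakRank ρ) {f g : IncidenceAlgebra ℤ[X] α} (hf : DegLE ρ f)
    (hdiag : ∀ s, f s s = 1) (hgf : g * f = 1) : DegLE ρ g := by
  intro s t hst
  refine interval_induction s (p := fun t => (g s t).natDegree ≤ ρ s t) (fun t hst ih => ?_) t hst
  have h := congrArg (fun k : IncidenceAlgebra ℤ[X] α => k s t) hgf
  rw [IncidenceAlgebra.mul_apply, IncidenceAlgebra.one_apply, ← Ico_insert_right hst,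
    sum_insert right_notMem_Ico, hdiag, mul_one] at h
  rw [eq_sub_of_add_eq h]
  refine (natDegree_sub_le _ _).trans (max_le ?_ ?_)
  · split_ifs <;> simp
  · refine natDegree_sum_le_of_forall_le _ _ fun w hw => ?_
    rw [mem_Ico] at hw
    rw [hρ.add hw.1 hw.2.le]
    exact natDegree_mul_le_of_le (ih w hw.1 hw.2) (hf _ _ hw.2.le)

lemma eval_one_reflect {p : ℤ[X]} {N : ℕ} (h : p.natDegree ≤ N) :
    (p.reflect N).eval 1 = p.eval 1 := by
  let : Invertible (1 : ℤ) := invertibleOne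
  simpa [eval₂_id] using eval₂_reflect_mul_pow (RingHom.id ℤ) 1 N p h

/-- Off the diagonal the entries of a kernel vanish at `1`: at `x = 1` the identity
`κ κ^rev = δ` reads `κ(1)² = δ`, so inductively `2 κ_{st}(1) = 0`. -/
lemma kernel_eval_one {κ : α → α → ℤ[X]} (hκ : IsKernel ρ κ) {s t : α} (hst : s < t) :
    (κ s t).eval 1 = 0 := by
  refine interval_induction s (p := fun t => s < t → (κ s t).eval 1 = 0)
    (fun t _ ih hst => ?_) t hst.le hst
  have h := congrArg (eval 1) (hκ.right hst.le)
  rw [conv, dlt, if_neg hst.ne, eval_zero, eval_finsetSum, ← Ico_insert_right hst.le,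
    sum_insert right_notMem_Ico, ← Ioo_insert_left hst, sum_insert left_notMem_Ioo,
    sum_eq_zero (s := Ioo s t) fun w hw => by
      rw [mem_Ioo] at hw
      rw [eval_mul, ih w hw.1.le hw.2 hw.1, zero_mul]] at h
  simp only [rev, eval_mul, eval_one_reflect (hκ.degLE hst.le),
    eval_one_reflect (hκ.degLE (le_refl t))] at h
  simp only [hκ.diag, eval_one] at h
  linarith

/-- A kernel is recovered from its reduced kernel. -/
lemma kernel_eq_red {κ : α → α → ℤ[X]} (hκ : IsKernel ρ κ) {s t : α} (hst : s < t) :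
    (X - 1) * red κ s t = κ s t := by
  rw [red, if_neg hst.ne]
  simpa using mul_divByMonic_eq_iff_isRoot.2 (kernel_eval_one hκ hst)

/-- `h^rev = x h - (x - 1) δ` for `h` symmetric as in the theorem. -/
lemma revInc_eq_of_symm (hρ : IsWeakRank ρ) {f : IncidenceAlgebra ℤ[X] α}
    (hdiag : ∀ s, f s s = 1) (hsymm : ∀ s t, s < t → PolySymm (ρ s t - 1) (f s t)) :
    revInc ρ f = (X : ℤ[X]) • f - (X - 1 : ℤ[X]) • 1 := by
  ext1 s t hst
  rw [revInc_apply, IncidenceAlgebra.sub_apply, IncidenceAlgebra.constSMul_apply,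
    IncidenceAlgebra.constSMul_apply, IncidenceAlgebra.one_apply]
  obtain rfl | hlt := hst.eq_or_lt
  · simp [hdiag, rank_self hρ, reflect_one]
  · obtain ⟨hd, hs⟩ := hsymm s t hlt
    have hpos := hρ.pos hlt
    have h := reflect_mul (1 : ℤ[X]) (f s t) (F := 1) (by simp) hd
    rw [one_mul, hs, reflect_one, pow_one, show 1 + (ρ s t - 1) = ρ s t by omega] at h
    simp [h, hlt.ne]

end

end ChowKernel

open ChowKernel in
/-- Proposition 3.6: if `H ∈ I_ρ(P)` has `H_{ss} = 1` and each `H_{st}` is symmetric with center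
`(ρ_{st}-1)/2`, then there exists a unique `(P,ρ)`-kernel `κ` whose Chow function is `H`;
it is given by `κ = H^rev · H⁻¹` (equivalently `κ · H = H^rev`). -/
theorem exists_unique_kernel_of_symmetric [PartialOrder α] [LocallyFiniteOrder α]
    (ρ : α → α → ℕ) (hρ : IsWeakRank ρ)
    (H : α → α → Polynomial ℤ)
    (hdeg : ∀ s t : α, s ≤ t → (H s t).natDegree ≤ ρ s t)
    (hdiag : ∀ s : α, H s s = 1)
    (hsymm : ∀ s t : α, s < t → PolySymm (ρ s t - 1) (H s t)) :
    ∃ κ : α → α → Polynomial ℤ,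
      (IsKernel ρ κ ∧ IsChow κ H ∧
        ∀ s t : α, s ≤ t → conv κ H s t = rev ρ H s t) ∧
      ∀ κ' : α → α → Polynomial ℤ, IsKernel ρ κ' → IsChow κ' H →
        ∀ s t : α, s ≤ t → κ' s t = κ s t := by
  set h := toInc H with hh
  have hH : ∀ s t, s ≤ t → h s t = H s t := fun s t => toInc_apply H
  have h1 : ∀ s, h s s = 1 := fun s => by rw [hH _ _ le_rfl, hdiag]
  have hhdeg : DegLE ρ h := fun s t hst => by rw [hH _ _ hst]; exact hdeg s t hst
  obtain ⟨g, hg1, hgh, hhg⟩ := exists_inv h h1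
  have hgdeg : DegLE ρ g := hhdeg.of_mul_eq_one hρ h1 hgh
  have hrev := revInc_eq_of_symm hρ h1 fun s t hst => by rw [hH _ _ hst.le]; exact hsymm s t hst
  have hrgh : revInc ρ g * revInc ρ h = 1 := by rw [← revInc_mul hρ hgdeg hhdeg, hgh, revInc_one hρ]
  have hrhg : revInc ρ h * revInc ρ g = 1 := by rw [← revInc_mul hρ hhdeg hgdeg, hhg, revInc_one hρ]
  set κ := revInc ρ h * g with hκ
  have hκrev : revInc ρ κ = h * revInc ρ g := by
    rw [hκ, revInc_mul hρ hhdeg.revInc hgdeg, revInc_revInc]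
  have hκg : κ = (X : ℤ[X]) • 1 - (X - 1 : ℤ[X]) • g := by
    rw [hκ, hrev, sub_mul, smul_mul_assoc, smul_mul_assoc, hhg, one_mul]
  have hκh : κ * h = revInc ρ h := by rw [hκ, mul_assoc, hgh, mul_one]
  have hκdiag : ∀ s, κ s s = 1 := fun s => by
    rw [hκg, IncidenceAlgebra.sub_apply, IncidenceAlgebra.constSMul_apply,
      IncidenceAlgebra.constSMul_apply, IncidenceAlgebra.one_apply, if_pos rfl, hg1]
    simp
  have hκlt : ∀ s t, s < t → κ s t = (X - 1) * -g s t := fun s t hst => by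
    rw [hκg, IncidenceAlgebra.sub_apply, IncidenceAlgebra.constSMul_apply,
      IncidenceAlgebra.constSMul_apply, IncidenceAlgebra.one_apply, if_neg hst.ne]
    simp
  have hred : toInc (red κ) = -g := by
    ext1 s t hst
    rw [toInc_apply _ hst, red, IncidenceAlgebra.neg_apply]
    obtain rfl | hlt := hst.eq_or_lt
    · rw [if_pos rfl, hg1]
    · rw [if_neg hlt.ne, hκlt s t hlt, show (X - 1 : ℤ[X]) = X - C 1 by simp,
        mul_divByMonic_cancel_left _ (monic_X_sub_C 1)]
  refine ⟨κ, ⟨⟨hhdeg.revInc.mul hρ hgdeg, hκdiag, fun s t _ => ?_, fun s t _ => ?_⟩,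
    ⟨fun s t _ => ?_, fun s t _ => ?_⟩, fun s t hst => ?_⟩, fun κ' hκ' hc s t hst => ?_⟩
  · change (revInc ρ κ * κ) s t = (1 : IncidenceAlgebra ℤ[X] α) s t
    rw [hκrev, hκ, mul_assoc, ← mul_assoc (revInc ρ g), hrgh, one_mul, hhg]
  · change (κ * revInc ρ κ) s t = (1 : IncidenceAlgebra ℤ[X] α) s t
    rw [hκrev, hκ, mul_assoc, ← mul_assoc g, hgh, one_mul, hrhg]
  · rw [← toInc_mul, hred, ← hh, neg_mul_inc, hgh]
    rfl
  · rw [← toInc_mul, hred, ← hh, mul_neg_inc, hhg]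
    rfl
  · rw [rev, ← hH s t hst, ← revInc_apply, ← hκh]
    refine sum_congr rfl fun w hw => ?_
    rw [hH _ _ (mem_Icc.1 hw).2]
  · obtain rfl | hlt := hst.eq_or_lt
    · rw [hκ'.diag, hκdiag]
    · have hmul : toInc (red κ') * h = -1 := by
        ext1 u v huv
        rw [hh, toInc_mul, hc.left huv]
        rfl
      have hred' : toInc (red κ') = -g := by
        rw [← mul_one (toInc (red κ')), ← hhg, ← mul_assoc, hmul, neg_mul_inc, one_mul]
      rw [← kernel_eq_red hκ' hlt, ← toInc_apply (red κ') hst, hred', hκlt s t hlt,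
        IncidenceAlgebra.neg_apply]
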